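/- Let K be a field of characteristic 0 and S = K[x_1,...,x_n]. Let I ⊆ S be a 0-Borel (strongly stable) monomial ideal and P ⊆ S an opposite lex ideal. Then dim_K (I ∩ P)_d ≤ dim_K (I^lex ∩ P)_d for all d ≥ 0. -/

import Mathlib

open MvPolynomial TensorProduct CategoryTheory

noncomputable section

/-- The polynomial ring `S = K[x_1,...,x_n]`, standard graded. -/
abbrev PS (K : Type) [Field K] (n : ℕ) : Type := MvPolynomial (Fin n) K

variable (K : Type) [Field K] (n : ℕ)

/-- An ideal of `S` is homogeneous if it contains all homogeneous components of its
elements. -/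
def IsHomog (I : Ideal (PS K n)) : Prop :=
  ∀ f ∈ I, ∀ d : ℕ, MvPolynomial.homogeneousComponent d f ∈ I

/-- The change of coordinates of `S` induced by `g ∈ GL_n(K)`, determined by
`g(x_i) = ∑_j g_{ji} x_j`. -/
def coordChange (g : GL (Fin n) K) : PS K n →ₐ[K] PS K n :=
  MvPolynomial.aeval (fun i => ∑ j, ((g : Matrix (Fin n) (Fin n) K) j i) • MvPolynomial.X j)

/-- A property `P` holds for a general change of coordinates `g ∈ GL_n(K)` if there is a
nonempty Zariski open subset `U ⊆ GL_n(K)` on which it holds; equivalently (as `GL_n(K)` is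
an irreducible variety over the infinite field `K`) there is a nonzero polynomial `F` in the
matrix entries such that `P g` holds whenever `F` does not vanish at `g`. -/
def generally (P : GL (Fin n) K → Prop) : Prop :=
  ∃ F : MvPolynomial (Fin n × Fin n) K, F ≠ 0 ∧
    ∀ g : GL (Fin n) K,
      MvPolynomial.eval (fun p => (g : Matrix (Fin n) (Fin n) K) p.1 p.2) F ≠ 0 → P g

/-- The Hilbert function: `H(I,d) = dim_K I_d`. -/
def hilb (I : Ideal (PS K n)) (d : ℕ) : ℕ :=
  Module.finrank K ↥(Submodule.restrictScalars K I ⊓ homogeneousSubmodule (Fin n) K d)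

/-- `a <_lex b` for the lexicographic order induced by `x_1 > x_2 > ⋯ > x_n`. -/
def lexLt (a b : Fin n →₀ ℕ) : Prop := Finsupp.Lex (· < ·) (· < ·) a b

/-- `a <_oplex b` for the (opposite) lexicographic order induced by `x_n > ⋯ > x_1`. -/
def oplexLt (a b : Fin n →₀ ℕ) : Prop := Finsupp.Lex (· > ·) (· < ·) a b

/-- The total degree of an exponent vector. -/
def expDeg (m : Fin n →₀ ℕ) : ℕ := ∑ i, m i

/-- A monomial ideal: together with any polynomial it contains each of its monomials. -/
def IsMonomialIdeal (I : Ideal (PS K n)) : Prop :=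
  ∀ f ∈ I, ∀ m ∈ f.support, MvPolynomial.monomial m (1 : K) ∈ I

/-- A lex ideal: a monomial ideal whose monomials form a lex set. -/
def IsLexIdeal (I : Ideal (PS K n)) : Prop :=
  IsMonomialIdeal K n I ∧ ∀ u v : Fin n →₀ ℕ, expDeg n u = expDeg n v →
    MvPolynomial.monomial u (1 : K) ∈ I → lexLt n u v →
      MvPolynomial.monomial v (1 : K) ∈ I

/-- An opposite lex ideal: a monomial ideal whose monomials form an opposite lex set. -/
def IsOplexIdeal (I : Ideal (PS K n)) : Prop :=
  IsMonomialIdeal K n I ∧ ∀ u v : Fin n →₀ ℕ, expDeg n u = expDeg n v →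
    MvPolynomial.monomial u (1 : K) ∈ I → oplexLt n u v →
      MvPolynomial.monomial v (1 : K) ∈ I

/-- The initial ideal `in_r(I)` of `I` with respect to a (strict) monomial order `r`:
the ideal generated by the `r`-maximal monomials of the nonzero elements of `I`. -/
def initialIdealO (r : (Fin n →₀ ℕ) → (Fin n →₀ ℕ) → Prop) (I : Ideal (PS K n)) :
    Ideal (PS K n) :=
  Ideal.span {g | ∃ f ∈ I, ∃ m ∈ f.support,
    (∀ m' ∈ f.support, m' = m ∨ r m' m) ∧ g = MvPolynomial.monomial m (1 : K)}

/-- A 0-Borel (strongly stable) monomial ideal: for every monomial `u·x_j ∈ I` and every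
`i < j`, also `u·x_i ∈ I`. -/
def IsZeroBorel (I : Ideal (PS K n)) : Prop :=
  IsMonomialIdeal K n I ∧ ∀ m : Fin n →₀ ℕ, MvPolynomial.monomial m (1 : K) ∈ I →
    ∀ i j : Fin n, i < j → m j ≠ 0 →
      MvPolynomial.monomial (m + Finsupp.single i 1 - Finsupp.single j 1) (1 : K) ∈ I

/-- An opposite 0-Borel monomial ideal: for every monomial `u·x_j ∈ I` and every `j < i`,
also `u·x_i ∈ I`. -/
def IsOpZeroBorel (I : Ideal (PS K n)) : Prop :=
  IsMonomialIdeal K n I ∧ ∀ m : Fin n →₀ ℕ, MvPolynomial.monomial m (1 : K) ∈ I →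
    ∀ i j : Fin n, j < i → m j ≠ 0 →
      MvPolynomial.monomial (m + Finsupp.single i 1 - Finsupp.single j 1) (1 : K) ∈ I

/-!
Both the inequality and Macaulay's theorem on shadows of lex sets are proved for finite sets of
monomials of a fixed degree, by a joint induction on the number of variables. Slice a strongly
stable set `B` by the exponent of the last variable and replace every slice by the lex set of the
same size; by Macaulay's theorem in fewer variables the result `C` is again strongly stable. Then
`#(B ∩ P) ≤ #(C ∩ P)` holds slice by slice. Comparing `C` with a lex set `L` of at least its
size, every monomial of `L \ C` has a larger exponent of the last variable than every monomial of
`C \ L`: so if some element of `C \ L` lies in the opposite lex set `P`, then all of `L \ C` does,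
and `#(C ∩ P) ≤ #(L ∩ P)` in either case. Conversely, the inequality for `P` the set of monomials
divisible by the last variable bounds the last-variable-free parts of lex sets, which control the
growth of their shadows, and this gives Macaulay's theorem in the same number of variables.
-/

section Segments

open Finset

lemma sum_add_single {σ M : Type*} [Fintype σ] [DecidableEq σ] [AddCommMonoid M]
    (a : σ → M) (i : σ) (c : M) : ∑ k, (a + Pi.single i c : σ → M) k = ∑ k, a k + c := by
  simp [sum_add_distrib]

variable {σ : Type*} [Fintype σ] [LinearOrder σ] {d : ℕ} {A B : Finset (σ → ℕ)}

/-- A lex set of monomials of degree `d`, a monomial being encoded by its exponent function. -/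
structure IsLexSegment (d : ℕ) (B : Finset (σ → ℕ)) : Prop where
  sum_eq : ∀ ⦃a⦄, a ∈ B → ∑ i, a i = d
  mem_of_lt : ∀ ⦃a b⦄, a ∈ B → ∑ i, b i = d → toLex a < toLex b → b ∈ B

/-- An opposite lex set of monomials of degree `d`: with variables ordered increasingly, the
opposite lexicographic order compares the largest variable first, so it is Mathlib's `Colex`. -/
structure IsOplexSegment (d : ℕ) (B : Finset (σ → ℕ)) : Prop where
  sum_eq : ∀ ⦃a⦄, a ∈ B → ∑ i, a i = d
  mem_of_lt : ∀ ⦃a b⦄, a ∈ B → ∑ i, b i = d → toColex a < toColex b → b ∈ B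

/-- A strongly stable (0-Borel) set of monomials of degree `d`. -/
structure IsStronglyStable (d : ℕ) (B : Finset (σ → ℕ)) : Prop where
  sum_eq : ∀ ⦃a⦄, a ∈ B → ∑ i, a i = d
  add_single_mem : ∀ ⦃a : σ → ℕ⦄ ⦃i j⦄, i < j → a + Pi.single j 1 ∈ B → a + Pi.single i 1 ∈ B

/-- The upper shadow of a set of monomials: all products of its elements with a variable. -/
def monomialShadow (B : Finset (σ → ℕ)) : Finset (σ → ℕ) :=
  image₂ (fun a i ↦ a + Pi.single i 1) B univ

lemma mem_monomialShadow {v : σ → ℕ} :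
    v ∈ monomialShadow B ↔ ∃ a ∈ B, ∃ i, a + Pi.single i 1 = v := by
  simp [monomialShadow]

lemma monomialShadow_mono (h : A ⊆ B) : monomialShadow A ⊆ monomialShadow B :=
  image₂_subset_right h

lemma exists_lt_and_gt_of_toLex_lt {u v : σ → ℕ} (hsum : ∑ i, u i = ∑ i, v i)
    (huv : toLex u < toLex v) :
    ∃ r s, r < s ∧ (∀ q < r, u q = v q) ∧ u r < v r ∧ v s < u s := by
  obtain ⟨r, heq, hlt⟩ := huv
  by_contra! hle
  refine (sum_lt_sum (fun q _ ↦ ?_) ⟨r, mem_univ r, hlt⟩).ne hsum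
  rcases lt_trichotomy q r with hq | rfl | hq
  · exact (heq q hq).le
  · exact hlt.le
  · exact hle r q hq heq hlt

lemma exists_toLex_add_single_le {u v : σ → ℕ} {t : ℕ} (hsum : ∑ i, u i + t = ∑ i, v i)
    (huv : toLex u < toLex v) : ∃ i, toLex (u + Pi.single i t) ≤ toLex v := by
  have : Nonempty σ := ⟨huv.choose⟩
  obtain ⟨i, hi⟩ := Finite.exists_max (id : σ → σ)
  refine ⟨i, le_of_not_gt fun hlt ↦ huv.not_gt ?_⟩
  obtain ⟨r, s, hrs, heq, hr, -⟩ :=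
    exists_lt_and_gt_of_toLex_lt (by rw [sum_add_single, hsum]) hlt
  have hri : r < i := hrs.trans_le (hi s)
  exact ⟨r, fun q hq ↦ by simp [heq q hq, (hq.trans hri).ne], by simpa [hri.ne] using hr⟩

namespace IsLexSegment

lemma mem_of_le (hB : IsLexSegment d B) {a b : σ → ℕ} (ha : a ∈ B) (hb : ∑ i, b i = d)
    (hab : toLex a ≤ toLex b) : b ∈ B := by
  rcases hab.lt_or_eq with hlt | heq
  · exact hB.mem_of_lt ha hb hlt
  · rwa [← toLex_inj.1 heq]

lemma subset_or_subset (hA : IsLexSegment d A) (hB : IsLexSegment d B) : A ⊆ B ∨ B ⊆ A := by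
  by_contra! h
  obtain ⟨⟨a, haA, haB⟩, b, hbB, hbA⟩ := And.imp not_subset.1 not_subset.1 h
  rcases le_total (toLex a) (toLex b) with hab | hba
  · exact hbA (hA.mem_of_le haA (hB.sum_eq hbB) hab)
  · exact haB (hB.mem_of_le hbB (hA.sum_eq haA) hba)

lemma subset_of_card_le (hA : IsLexSegment d A) (hB : IsLexSegment d B) (h : #A ≤ #B) :
    A ⊆ B :=
  (hA.subset_or_subset hB).elim id fun hBA ↦ (eq_of_subset_of_card_le hBA h).ge

lemma exists_superset_card_eq (hB : IsLexSegment d B) {k : ℕ} (hBk : #B ≤ k)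
    (hk : k ≤ #(piAntidiag (univ : Finset σ) d)) :
    ∃ C, IsLexSegment d C ∧ B ⊆ C ∧ #C = k := by
  induction k, hBk using Nat.le_induction with
  | base => exact ⟨B, hB, Subset.rfl, rfl⟩
  | succ k _ ih =>
    obtain ⟨C, hC, hBC, rfl⟩ := ih (by omega)
    obtain ⟨m, hm, hmax⟩ := exists_max_image (piAntidiag univ d \ C) toLex <|
      sdiff_nonempty_of_card_lt_card hk
    simp only [mem_sdiff, mem_piAntidiag, mem_univ, implies_true, and_true] at hm hmax
    refine ⟨insert m C, ⟨fun a ha ↦ ?_, fun a b ha hb hab ↦ ?_⟩,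
      hBC.trans (subset_insert m C), card_insert_of_notMem hm.2⟩
    · rcases mem_insert.1 ha with rfl | ha
      exacts [hm.1, hC.sum_eq ha]
    · rcases mem_insert.1 ha with rfl | ha
      · by_contra hbC
        exact (hmax b ⟨hb, fun h ↦ hbC (mem_insert_of_mem h)⟩).not_gt hab
      · exact mem_insert_of_mem (hC.mem_of_lt ha hb hab)

lemma isStronglyStable (hB : IsLexSegment d B) : IsStronglyStable d B where
  sum_eq := hB.sum_eq
  add_single_mem a i j hij ha := by
    refine hB.mem_of_lt ha ?_ ⟨i, fun k hk ↦ ?_, ?_⟩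
    · have := hB.sum_eq ha
      rwa [sum_add_single] at this ⊢
    · simp [hk.ne, (hk.trans hij).ne]
    · simp [hij.ne]

/-- Divide a monomial `v` above `m * x_i` by its last variable `x_j`: if the quotient `u` were
below `m`, then `u` and `v` would agree up to the first place where `u` drops below `m`. -/
protected lemma monomialShadow (hB : IsLexSegment d B) :
    IsLexSegment (d + 1) (monomialShadow B) where
  sum_eq w hw := by
    obtain ⟨m, hm, i, rfl⟩ := mem_monomialShadow.1 hw
    rw [sum_add_single, hB.sum_eq hm]
  mem_of_lt w v hw hv hwv := by
    obtain ⟨m, hm, i, rfl⟩ := mem_monomialShadow.1 hw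
    obtain ⟨j, hj, hjmax⟩ : ∃ j, v j ≠ 0 ∧ ∀ s, v s ≠ 0 → s ≤ j := by
      have hne : (univ.filter (v · ≠ 0)).Nonempty := by
        by_contra! h
        simp_all [filter_eq_empty_iff]
      simpa using exists_max_image _ id hne
    obtain ⟨u, rfl⟩ : ∃ u, v = u + Pi.single j 1 :=
      ⟨v - Pi.single j 1, (tsub_add_cancel_of_le (by
        simpa [Pi.single, update_le_iff, Nat.one_le_iff_ne_zero])).symm⟩
    have hu : ∑ q, u q = d := Nat.succ_injective ((sum_add_single u j 1).symm.trans hv)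
    refine mem_monomialShadow.2 ⟨u, ?_, j, rfl⟩
    by_contra huB
    have hum : toLex u < toLex m := lt_of_not_ge fun h ↦ huB (hB.mem_of_le hm hu h)
    obtain ⟨r, s, hrs, heq, hr, hs⟩ :=
      exists_lt_and_gt_of_toLex_lt (hu.trans (hB.sum_eq hm).symm) hum
    have hrj : r < j := hrs.trans_le (hjmax s (by simp; omega))
    have hvm : toLex (u + Pi.single j 1) < toLex m :=
      ⟨r, fun q hq ↦ by simp [(hq.trans hrj).ne, heq q hq], by simpa [hrj.ne]⟩
    exact (hwv.trans hvm).not_ge (Pi.toLex_monotone (by simp))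

end IsLexSegment

lemma IsStronglyStable.add_single_mem_of_lt (hB : IsStronglyStable d B) {i j : σ} (hij : i < j)
    (t : ℕ) {a : σ → ℕ} (ha : a + Pi.single j t ∈ B) : a + Pi.single i t ∈ B := by
  induction t generalizing a with
  | zero => simpa using ha
  | succ t ih =>
    rw [Pi.single_add, ← add_assoc] at ha ⊢
    refine hB.add_single_mem hij ?_
    rw [add_right_comm] at ha ⊢
    exact ih ha

end Segments

section Slices

open Finset

variable {n} {d : ℕ}

lemma snoc_add_single (a : Fin n → ℕ) (k : ℕ) (i : Fin n) (c : ℕ) :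
    (Fin.snoc (a + Pi.single i c) k : Fin (n + 1) → ℕ) =
      (Fin.snoc a k : Fin (n + 1) → ℕ) + Pi.single i.castSucc c := by
  ext q
  cases q using Fin.lastCases <;> simp [Pi.single_apply, (Fin.castSucc_lt_last i).ne']

lemma snoc_add_single_last (a : Fin n → ℕ) (k c : ℕ) :
    (Fin.snoc a (k + c) : Fin (n + 1) → ℕ) =
      (Fin.snoc a k : Fin (n + 1) → ℕ) + Pi.single (Fin.last n) c := by
  ext q
  cases q using Fin.lastCases <;> simp [(Fin.castSucc_lt_last _).ne]

lemma toLex_snoc_lt_toLex_snoc {a b : Fin n → ℕ} (hab : toLex a < toLex b) (k l : ℕ) :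
    toLex (Fin.snoc a k : Fin (n + 1) → ℕ) < toLex (Fin.snoc b l : Fin (n + 1) → ℕ) := by
  obtain ⟨i, heq, hlt⟩ := hab
  refine ⟨i.castSucc, fun q hq ↦ ?_, by simpa using hlt⟩
  cases q using Fin.lastCases with
  | last => exact absurd hq (Fin.le_last _).not_gt
  | cast q => simpa using heq q (by simpa using hq)

lemma toLex_lt_of_toLex_snoc_lt {a b : Fin n → ℕ} {k l : ℕ} (hlk : l ≤ k)
    (h : toLex (Fin.snoc a k : Fin (n + 1) → ℕ) < toLex (Fin.snoc b l : Fin (n + 1) → ℕ)) :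
    toLex a < toLex b := by
  by_contra hba
  rcases (le_of_not_gt hba).lt_or_eq with hlt | heq
  · exact (toLex_snoc_lt_toLex_snoc hlt l k).not_gt h
  · rw [toLex_inj.1 heq] at h
    refine h.not_ge (Pi.toLex_monotone fun q ↦ ?_)
    cases q using Fin.lastCases <;> simp [hlk]

lemma toColex_snoc_lt_toColex_snoc {a b : Fin n → ℕ} (hab : toColex a < toColex b) (k : ℕ) :
    toColex (Fin.snoc a k : Fin (n + 1) → ℕ) < toColex (Fin.snoc b k : Fin (n + 1) → ℕ) := by
  obtain ⟨i, heq, hlt⟩ := hab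
  refine ⟨i.castSucc, fun q hq ↦ ?_, by simpa using hlt⟩
  cases q using Fin.lastCases with
  | last => simp
  | cast q => simpa using heq q (by simpa using hq)

lemma toColex_lt_of_last_lt {a b : Fin (n + 1) → ℕ} (h : a (Fin.last n) < b (Fin.last n)) :
    toColex a < toColex b :=
  ⟨Fin.last n, fun q hq ↦ absurd hq (Fin.le_last q).not_gt, h⟩

/-- The slice of a set of monomials in `n + 1` variables at exponent `k` of the last variable,
viewed as a set of monomials in the first `n` variables. -/
def lastSlice (k : ℕ) (B : Finset (Fin (n + 1) → ℕ)) : Finset (Fin n → ℕ) :=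
  B.preimage (Fin.snoc (α := fun _ ↦ ℕ) · k) (Fin.snoc_left_injective (α := fun _ ↦ ℕ) k).injOn

variable {B C L P : Finset (Fin (n + 1) → ℕ)}

lemma mem_lastSlice {k : ℕ} {a : Fin n → ℕ} :
    a ∈ lastSlice k B ↔ (Fin.snoc a k : Fin (n + 1) → ℕ) ∈ B :=
  mem_preimage

lemma lastSlice_inter (k : ℕ) : lastSlice k (B ∩ C) = lastSlice k B ∩ lastSlice k C := by
  ext a
  simp [mem_lastSlice]

lemma card_lastSlice (k : ℕ) (B : Finset (Fin (n + 1) → ℕ)) :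
    #(lastSlice k B) = #{a ∈ B | a (Fin.last n) = k} := by
  refine card_bij (fun a _ ↦ Fin.snoc a k) (fun a ha ↦ by simpa [mem_lastSlice] using ha)
    (fun a _ b _ hab ↦ Fin.snoc_left_injective (α := fun _ ↦ ℕ) k hab) fun a ha ↦ ?_
  obtain ⟨ha, rfl⟩ := mem_filter.1 ha
  exact ⟨Fin.init a, by simpa [mem_lastSlice], Fin.snoc_init_self a⟩

lemma card_eq_sum_card_lastSlice (hB : ∀ a ∈ B, ∑ i, a i = d) :
    #B = ∑ k ∈ range (d + 1), #(lastSlice k B) := by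
  simp only [card_lastSlice]
  refine card_eq_sum_card_fiberwise fun a ha ↦ mem_coe.2 (mem_range_succ_iff.2 ?_)
  exact (single_le_sum_of_canonicallyOrdered (mem_univ _)).trans_eq (hB a ha)

lemma sum_add_eq_of_mem_lastSlice {k : ℕ} {a : Fin n → ℕ} (hB : ∀ a ∈ B, ∑ i, a i = d)
    (ha : a ∈ lastSlice k B) : ∑ i, a i + k = d := by
  simpa [Fin.sum_snoc] using hB _ (mem_lastSlice.1 ha)

lemma exists_lastSlice_eq {D : ℕ → Finset (Fin n → ℕ)} (hD : ∀ k, ∀ a ∈ D k, ∑ i, a i + k = d) :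
    ∃ B : Finset (Fin (n + 1) → ℕ), (∀ a ∈ B, ∑ i, a i = d) ∧ ∀ k, lastSlice k B = D k := by
  let B : Finset (Fin (n + 1) → ℕ) := {a ∈ piAntidiag univ d | Fin.init a ∈ D (a (Fin.last n))}
  refine ⟨B, fun a ha ↦ (mem_piAntidiag.1 (mem_filter.1 ha).1).1, fun k ↦ ?_⟩
  ext a
  simpa [B, mem_lastSlice, Fin.sum_snoc] using hD k a

protected lemma IsLexSegment.lastSlice (hB : IsLexSegment d B) (k : ℕ) :
    IsLexSegment (d - k) (lastSlice k B) where
  sum_eq a ha := Nat.eq_sub_of_add_eq (sum_add_eq_of_mem_lastSlice hB.sum_eq ha)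
  mem_of_lt a b ha hb hab := by
    have hk := sum_add_eq_of_mem_lastSlice hB.sum_eq ha
    refine mem_lastSlice.2 <| hB.mem_of_lt (mem_lastSlice.1 ha) ?_ <|
      toLex_snoc_lt_toLex_snoc hab k k
    rw [Fin.sum_snoc]
    omega

protected lemma IsOplexSegment.lastSlice (hP : IsOplexSegment d P) (k : ℕ) :
    IsOplexSegment (d - k) (lastSlice k P) where
  sum_eq a ha := Nat.eq_sub_of_add_eq (sum_add_eq_of_mem_lastSlice hP.sum_eq ha)
  mem_of_lt a b ha hb hab := by
    have hk := sum_add_eq_of_mem_lastSlice hP.sum_eq ha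
    refine mem_lastSlice.2 <| hP.mem_of_lt (mem_lastSlice.1 ha) ?_ <|
      toColex_snoc_lt_toColex_snoc hab k
    rw [Fin.sum_snoc]
    omega

namespace IsStronglyStable

protected lemma lastSlice (hB : IsStronglyStable d B) (k : ℕ) :
    IsStronglyStable (d - k) (lastSlice k B) where
  sum_eq a ha := Nat.eq_sub_of_add_eq (sum_add_eq_of_mem_lastSlice hB.sum_eq ha)
  add_single_mem a i j hij ha := by
    rw [mem_lastSlice, snoc_add_single] at ha ⊢
    exact hB.add_single_mem (Fin.castSucc_lt_castSucc_iff.2 hij) ha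

lemma monomialShadow_lastSlice_subset (hB : IsStronglyStable d B) (k : ℕ) :
    monomialShadow (lastSlice (k + 1) B) ⊆ lastSlice k B := by
  intro v hv
  obtain ⟨a, ha, i, rfl⟩ := mem_monomialShadow.1 hv
  rw [mem_lastSlice, snoc_add_single_last] at ha
  rw [mem_lastSlice, snoc_add_single]
  exact hB.add_single_mem (Fin.castSucc_lt_last i) ha

lemma of_lastSlice (hB : ∀ a ∈ B, ∑ i, a i = d)
    (hslice : ∀ k, IsStronglyStable (d - k) (lastSlice k B))
    (hshadow : ∀ k, monomialShadow (lastSlice (k + 1) B) ⊆ lastSlice k B) :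
    IsStronglyStable d B where
  sum_eq := hB
  add_single_mem a i j hij ha := by
    cases a using Fin.snocCases with | _ b k
    obtain ⟨i, rfl⟩ := Fin.exists_castSucc_eq.2 (hij.trans_le (Fin.le_last j)).ne
    rw [← snoc_add_single, ← mem_lastSlice]
    cases j using Fin.lastCases with
    | last =>
      rw [← snoc_add_single_last, ← mem_lastSlice] at ha
      exact hshadow k (mem_monomialShadow.2 ⟨b, ha, i, rfl⟩)
    | cast j =>
      rw [← snoc_add_single, ← mem_lastSlice] at ha
      exact (hslice k).add_single_mem (Fin.castSucc_lt_castSucc_iff.1 hij) ha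

/-- A product of a monomial involving the last variable with another variable can be rewritten,
by stability, as a product with the last variable. -/
lemma monomialShadow_eq_image_union_image (hB : IsStronglyStable d B) :
    monomialShadow B = B.image (· + Pi.single (Fin.last n) 1) ∪
      (monomialShadow (lastSlice 0 B)).image (Fin.snoc (α := fun _ ↦ ℕ) · 0) := by
  ext v
  simp only [mem_union, mem_image, mem_monomialShadow]
  constructor
  · rintro ⟨a, ha, i, rfl⟩
    cases a using Fin.snocCases with | _ b k
    cases i using Fin.lastCases with
    | last => exact .inl ⟨_, ha, rfl⟩
    | cast i =>
      rcases k with _ | k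
      · exact .inr ⟨_, ⟨b, mem_lastSlice.2 ha, i, rfl⟩, snoc_add_single b 0 i 1⟩
      · rw [snoc_add_single_last] at ha ⊢
        exact .inl ⟨_, hB.add_single_mem (Fin.castSucc_lt_last i) ha, add_right_comm _ _ _⟩
  · rintro (⟨a, ha, rfl⟩ | ⟨_, ⟨b, hb, i, rfl⟩, rfl⟩)
    · exact ⟨a, ha, Fin.last n, rfl⟩
    · exact ⟨_, mem_lastSlice.1 hb, i.castSucc, (snoc_add_single b 0 i 1).symm⟩

lemma card_monomialShadow (hB : IsStronglyStable d B) :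
    #(monomialShadow B) = #B + #(monomialShadow (lastSlice 0 B)) := by
  rw [hB.monomialShadow_eq_image_union_image, card_union_of_disjoint,
    card_image_of_injective _ (add_left_injective _),
    card_image_of_injective _ (Fin.snoc_left_injective (α := fun _ ↦ ℕ) 0)]
  refine disjoint_left.2 fun v hv hv' ↦ ?_
  obtain ⟨a, -, rfl⟩ := mem_image.1 hv
  obtain ⟨b, -, hb⟩ := mem_image.1 hv'
  simpa using congrFun hb (Fin.last n)

end IsStronglyStable

end Slices

section Comparison

open Finset

/-- The inequality `#(B ∩ P) ≤ #(L ∩ P)` of the theorem in every degree, for strongly stable `B`,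
lex `L` with at least as many monomials as `B`, and opposite lex `P` in `n` variables. -/
def OplexBound (n : ℕ) : Prop :=
  ∀ (d : ℕ) (B L P : Finset (Fin n → ℕ)), IsStronglyStable d B → IsLexSegment d L →
    IsOplexSegment d P → #B ≤ #L → #(B ∩ P) ≤ #(L ∩ P)

/-- Macaulay's theorem for strongly stable sets in `n` variables: lex sets have the smallest
shadows. -/
def MacaulayBound (n : ℕ) : Prop :=
  ∀ (d : ℕ) (B L : Finset (Fin n → ℕ)), IsStronglyStable d B → IsLexSegment d L →
    #L ≤ #B → #(monomialShadow L) ≤ #(monomialShadow B)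

lemma oplexBound_zero : OplexBound 0 := fun _ B _ _ hB hL _ hle ↦
  have hBlex : IsLexSegment _ B := ⟨hB.sum_eq, fun a b ha _ _ ↦ Subsingleton.elim a b ▸ ha⟩
  card_le_card (inter_subset_inter_right (hBlex.subset_of_card_le hL hle))

lemma macaulayBound_zero : MacaulayBound 0 := fun _ _ _ _ _ _ ↦ by
  simp [monomialShadow]

variable {n} {d : ℕ} {B C L P : Finset (Fin (n + 1) → ℕ)}

lemma MacaulayBound.exists_lex_lastSlice (hn : MacaulayBound n) (hB : IsStronglyStable d B) :
    ∃ C : Finset (Fin (n + 1) → ℕ), IsStronglyStable d C ∧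
      (∀ k, IsLexSegment (d - k) (lastSlice k C)) ∧ ∀ k, #(lastSlice k C) = #(lastSlice k B) := by
  have hslice (k : ℕ) : ∃ D : Finset (Fin n → ℕ),
      IsLexSegment (d - k) D ∧ ∅ ⊆ D ∧ #D = #(lastSlice k B) := by
    refine IsLexSegment.exists_superset_card_eq ⟨by simp, by simp⟩ (by simp)
      (card_le_card fun a ha ↦ ?_)
    simp [(hB.lastSlice k).sum_eq ha]
  choose D hDlex _ hDcard using hslice
  have hDdeg {k : ℕ} {a : Fin n → ℕ} (ha : a ∈ D k) : ∑ i, a i + k = d := by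
    obtain ⟨b, hb⟩ := card_pos.1 ((card_pos.2 ⟨a, ha⟩).trans_eq (hDcard k))
    have := sum_add_eq_of_mem_lastSlice hB.sum_eq hb
    have := (hDlex k).sum_eq ha
    omega
  have hDshadow (k : ℕ) : monomialShadow (D (k + 1)) ⊆ D k := by
    rcases (D (k + 1)).eq_empty_or_nonempty with hempty | ⟨a, ha⟩
    · simp [hempty, monomialShadow]
    have hlex := (hDlex (k + 1)).monomialShadow
    have hdeg : d - (k + 1) + 1 = d - k := by
      have := hDdeg ha
      omega
    rw [hdeg] at hlex
    refine hlex.subset_of_card_le (hDlex k) ?_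
    calc #(monomialShadow (D (k + 1)))
        ≤ #(monomialShadow (lastSlice (k + 1) B)) :=
          hn _ _ _ (hB.lastSlice _) (hDlex _) (hDcard _).le
      _ ≤ #(lastSlice k B) := card_le_card (hB.monomialShadow_lastSlice_subset k)
      _ = #(D k) := (hDcard k).symm
  obtain ⟨C, hCdeg, hC⟩ := exists_lastSlice_eq fun _ _ ↦ hDdeg
  simp only [← hC] at hDlex hDcard hDshadow
  exact ⟨C, .of_lastSlice hCdeg (fun k ↦ (hDlex k).isStronglyStable) hDshadow, hDlex, hDcard⟩

/-- If `w` had the larger exponent of the last variable, trade the surplus for the last of the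
other variables. The result stays in `C` and at most `u`, and it is now in the slice of `u`; as
that slice is lex, `u` would lie in `C`. -/
lemma IsStronglyStable.last_lt_last (hC : IsStronglyStable d C)
    (hCslice : ∀ k, IsLexSegment (d - k) (lastSlice k C)) (hL : IsLexSegment d L)
    {u w : Fin (n + 1) → ℕ} (hu : u ∈ L) (huC : u ∉ C) (hw : w ∈ C) (hwL : w ∉ L) :
    w (Fin.last n) < u (Fin.last n) := by
  by_contra! hle
  have hwu : toLex w < toLex u :=
    lt_of_not_ge fun h ↦ hwL (hL.mem_of_le hu (hC.sum_eq hw) h)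
  cases u using Fin.snocCases with | _ u k
  cases w using Fin.snocCases with | _ w l
  simp only [Fin.snoc_last] at hle
  obtain ⟨t, rfl⟩ := Nat.exists_eq_add_of_le hle
  have hk : ∑ i, u i + k = d := by simpa [Fin.sum_snoc] using hL.sum_eq hu
  have hkt : ∑ i, w i + (k + t) = d := by simpa [Fin.sum_snoc] using hC.sum_eq hw
  obtain ⟨i, hi⟩ := exists_toLex_add_single_le (t := t) (by omega)
    (toLex_lt_of_toLex_snoc_lt (Nat.le_add_right k t) hwu)
  rw [snoc_add_single_last] at hw
  have hw' : w + Pi.single i t ∈ lastSlice k C := by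
    rw [mem_lastSlice, snoc_add_single]
    exact hC.add_single_mem_of_lt (Fin.castSucc_lt_last i) t hw
  exact huC (mem_lastSlice.1 ((hCslice k).mem_of_le hw' (by omega) hi))

lemma IsStronglyStable.card_inter_le (hC : IsStronglyStable d C)
    (hCslice : ∀ k, IsLexSegment (d - k) (lastSlice k C)) (hL : IsLexSegment d L)
    (hP : IsOplexSegment d P) (hCL : #C ≤ #L) : #(C ∩ P) ≤ #(L ∩ P) := by
  by_cases hsub : C ∩ P ⊆ L
  · exact card_le_card (subset_inter hsub inter_subset_right)
  obtain ⟨w, hw, hwL⟩ := not_subset.1 hsub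
  obtain ⟨hwC, hwP⟩ := mem_inter.1 hw
  have hdiff : L \ P ⊆ C \ P := fun u hu ↦ by
    obtain ⟨huL, huP⟩ := mem_sdiff.1 hu
    refine mem_sdiff.2 ⟨by_contra fun huC ↦ huP ?_, huP⟩
    exact hP.mem_of_lt hwP (hL.sum_eq huL)
      (toColex_lt_of_last_lt (hC.last_lt_last hCslice hL huL huC hwC hwL))
  have := card_le_card hdiff
  have := card_sdiff_add_card_inter L P
  have := card_sdiff_add_card_inter C P
  omega

lemma OplexBound.succ (hn : OplexBound n) (hn' : MacaulayBound n) : OplexBound (n + 1) := by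
  intro d B L P hB hL hP hBL
  obtain ⟨C, hC, hCslice, hCcard⟩ := hn'.exists_lex_lastSlice hB
  have hCB : #C = #B := by
    simp only [card_eq_sum_card_lastSlice hC.sum_eq, card_eq_sum_card_lastSlice hB.sum_eq, hCcard]
  calc #(B ∩ P) = ∑ k ∈ range (d + 1), #(lastSlice k B ∩ lastSlice k P) := by
        simp only [← lastSlice_inter]
        exact card_eq_sum_card_lastSlice fun a ha ↦ hB.sum_eq (mem_inter.1 ha).1
    _ ≤ ∑ k ∈ range (d + 1), #(lastSlice k C ∩ lastSlice k P) := sum_le_sum fun k _ ↦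
        hn _ _ _ _ (hB.lastSlice k) (hCslice k) (hP.lastSlice k) (hCcard k).ge
    _ = #(C ∩ P) := by
        simp only [← lastSlice_inter]
        exact (card_eq_sum_card_lastSlice fun a ha ↦ hC.sum_eq (mem_inter.1 ha).1).symm
    _ ≤ #(L ∩ P) := hC.card_inter_le hCslice hL hP (hCB.trans_le hBL)

lemma isOplexSegment_last_ne_zero (n d : ℕ) :
    IsOplexSegment d {a ∈ piAntidiag (univ : Finset (Fin (n + 1))) d | a (Fin.last n) ≠ 0} where
  sum_eq a ha := (mem_piAntidiag.1 (mem_filter.1 ha).1).1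
  mem_of_lt a b ha hb hab := by
    have hlast : a (Fin.last n) ≤ b (Fin.last n) :=
      le_of_not_gt fun h ↦ (toColex_lt_of_last_lt h).not_gt hab
    have := (mem_filter.1 ha).2
    simp only [mem_filter, mem_piAntidiag, hb, mem_univ, implies_true, and_self, true_and]
    omega

lemma OplexBound.card_lastSlice_zero_le (hn : OplexBound (n + 1)) (hB : IsStronglyStable d B)
    (hL : IsLexSegment d L) (h : #L = #B) : #(lastSlice 0 L) ≤ #(lastSlice 0 B) := by
  let P : Finset (Fin (n + 1) → ℕ) := {a ∈ piAntidiag univ d | a (Fin.last n) ≠ 0}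
  have hcard {A : Finset (Fin (n + 1) → ℕ)} (hA : ∀ a ∈ A, ∑ i, a i = d) :
      #(lastSlice 0 A) + #(A ∩ P) = #A := by
    have hAP : A ∩ P = {a ∈ A | a (Fin.last n) ≠ 0} := by
      ext a
      simpa [P] using fun ha _ ↦ hA a ha
    rw [card_lastSlice, hAP, card_filter_add_card_filter_not]
  have := hn d B L P hB hL (isOplexSegment_last_ne_zero n d) h.ge
  have := hcard hB.sum_eq
  have := hcard hL.sum_eq
  omega

lemma MacaulayBound.succ (hn : MacaulayBound n) (hn' : OplexBound (n + 1)) :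
    MacaulayBound (n + 1) := by
  intro d B L hB hL hLB
  obtain ⟨L', hL', hLL', hcard⟩ := hL.exists_superset_card_eq hLB
    (card_le_card fun a ha ↦ by simp [hB.sum_eq ha])
  have hslice := hn'.card_lastSlice_zero_le hB hL' hcard
  calc #(monomialShadow L) ≤ #(monomialShadow L') := card_le_card (monomialShadow_mono hLL')
    _ = #L' + #(monomialShadow (lastSlice 0 L')) := hL'.isStronglyStable.card_monomialShadow
    _ ≤ #B + #(monomialShadow (lastSlice 0 B)) :=
        add_le_add hcard.le (hn _ _ _ (hB.lastSlice 0) (hL'.lastSlice 0) hslice)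
    _ = #(monomialShadow B) := hB.card_monomialShadow.symm

lemma oplexBound_and_macaulayBound (n : ℕ) : OplexBound n ∧ MacaulayBound n := by
  induction n with
  | zero => exact ⟨oplexBound_zero, macaulayBound_zero⟩
  | succ n ih =>
    have hop := ih.1.succ ih.2
    exact ⟨hop, ih.2.succ hop⟩

end Comparison

section Ideals

open Finset

variable {K n} {I P : Ideal (PS K n)}

open Classical in
/-- The exponents of the monomials of degree `d` in an ideal of `S`. -/
def exponents (I : Ideal (PS K n)) (d : ℕ) : Finset (Fin n → ℕ) :=
  {a ∈ piAntidiag univ d | monomial (Finsupp.equivFunOnFinite.symm a) 1 ∈ I}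

lemma mem_exponents {d : ℕ} {a : Fin n → ℕ} :
    a ∈ exponents I d ↔
      ∑ i, a i = d ∧ monomial (Finsupp.equivFunOnFinite.symm a) 1 ∈ I := by
  simp [exponents]

lemma exponents_inf (I P : Ideal (PS K n)) (d : ℕ) :
    exponents (I ⊓ P) d = exponents I d ∩ exponents P d := by
  ext a
  simp only [mem_inter, mem_exponents, Submodule.mem_inf]
  tauto

lemma IsMonomialIdeal.inf (hI : IsMonomialIdeal K n I) (hP : IsMonomialIdeal K n P) :
    IsMonomialIdeal K n (I ⊓ P) :=
  fun f hf m hm ↦ ⟨hI f hf.1 m hm, hP f hf.2 m hm⟩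

lemma IsMonomialIdeal.mem_iff (hI : IsMonomialIdeal K n I) {f : PS K n} :
    f ∈ I ↔ ∀ m ∈ f.support, monomial m (1 : K) ∈ I := by
  refine ⟨hI f, fun h ↦ ?_⟩
  rw [f.as_sum]
  refine sum_mem fun m hm ↦ ?_
  simpa [C_mul_monomial] using I.mul_mem_left (MvPolynomial.C (f.coeff m)) (h m hm)

lemma IsMonomialIdeal.restrictScalars_inf_homogeneousSubmodule (hI : IsMonomialIdeal K n I)
    (d : ℕ) : I.restrictScalars K ⊓ homogeneousSubmodule (Fin n) K d =
      restrictSupport K {m | ⇑m ∈ exponents I d} := by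
  have hhom : homogeneousSubmodule (Fin n) K d = restrictSupport K {m | m.degree = d} :=
    homogeneousSubmodule_eq_finsupp_supported _ K d
  have hexp (m : Fin n →₀ ℕ) :
      ⇑m ∈ exponents I d ↔ m.degree = d ∧ monomial m (1 : K) ∈ I := by
    simp [mem_exponents, Finsupp.degree_eq_sum]
  ext f
  simp only [hhom, hexp, Submodule.mem_inf, Submodule.restrictScalars_mem,
    mem_restrictSupport_iff]
  rw [hI.mem_iff]
  exact ⟨fun h m hm ↦ ⟨h.2 hm, h.1 m hm⟩, fun h ↦ ⟨fun m hm ↦ (h hm).2, fun m hm ↦ (h hm).1⟩⟩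

lemma IsMonomialIdeal.hilb_eq_card_exponents (hI : IsMonomialIdeal K n I) (d : ℕ) :
    hilb K n I d = #(exponents I d) := by
  rw [hilb, hI.restrictScalars_inf_homogeneousSubmodule,
    Module.finrank_eq_nat_card_basis (basisRestrictSupport K _), ← Nat.card_eq_finsetCard]
  exact Nat.card_congr (Finsupp.equivFunOnFinite.subtypeEquiv fun _ ↦ .rfl)

lemma IsZeroBorel.isStronglyStable (hI : IsZeroBorel K n I) (d : ℕ) :
    IsStronglyStable d (exponents I d) where
  sum_eq a ha := (mem_exponents.1 ha).1
  add_single_mem a i j hij ha := by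
    rw [mem_exponents, sum_add_single] at ha ⊢
    refine ⟨ha.1, ?_⟩
    convert hI.2 _ ha.2 i j hij (by simp) using 3
    refine eq_tsub_of_add_eq ?_
    ext
    simp [Finsupp.single_eq_pi_single, add_right_comm]

lemma IsLexIdeal.isLexSegment (hI : IsLexIdeal K n I) (d : ℕ) :
    IsLexSegment d (exponents I d) where
  sum_eq a ha := (mem_exponents.1 ha).1
  mem_of_lt a b ha hb hab := by
    rw [mem_exponents] at ha ⊢
    exact ⟨hb, hI.2 _ _ (by simp [expDeg, ha.1, hb]) ha.2 hab⟩

lemma IsOplexIdeal.isOplexSegment (hP : IsOplexIdeal K n P) (d : ℕ) :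
    IsOplexSegment d (exponents P d) where
  sum_eq a ha := (mem_exponents.1 ha).1
  mem_of_lt a b ha hb hab := by
    rw [mem_exponents] at ha ⊢
    exact ⟨hb, hP.2 _ _ (by simp [expDeg, ha.1, hb]) ha.2 hab⟩

theorem dim_borel_inter_oplex_le_general {Ilex : Ideal (PS K n)} (hI : IsZeroBorel K n I)
    (hP : IsOplexIdeal K n P) (hIlex : IsLexIdeal K n Ilex) {d : ℕ}
    (hd : hilb K n I d ≤ hilb K n Ilex d) :
    hilb K n (I ⊓ P) d ≤ hilb K n (Ilex ⊓ P) d := by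
  rw [hI.1.hilb_eq_card_exponents, hIlex.1.hilb_eq_card_exponents] at hd
  rw [(hI.1.inf hP.1).hilb_eq_card_exponents, (hIlex.1.inf hP.1).hilb_eq_card_exponents,
    exponents_inf, exponents_inf]
  exact (oplexBound_and_macaulayBound n).1 d _ _ _ (hI.isStronglyStable d)
    (hIlex.isLexSegment d) (hP.isOplexSegment d) hd

end Ideals

/-- **Lemma 3.2** (Caviglia–Murai): let `char K = 0`, `I ⊆ S` a 0-Borel (strongly stable)
ideal and `P ⊆ S` an opposite lex ideal.  Then `dim_K (I ∩ P)_d ≤ dim_K (I^lex ∩ P)_d`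
for all `d ≥ 0`. -/
theorem dim_borel_inter_oplex_le [CharZero K]
    (I P : Ideal (PS K n)) (hI : IsZeroBorel K n I) (hP : IsOplexIdeal K n P)
    (Ilex : Ideal (PS K n)) (hIlex : IsLexIdeal K n Ilex)
    (hIlexHilb : ∀ d : ℕ, hilb K n Ilex d = hilb K n I d) :
    ∀ d : ℕ, hilb K n (I ⊓ P) d ≤ hilb K n (Ilex ⊓ P) d :=
  fun d ↦ dim_borel_inter_oplex_le_general hI hP hIlex (hIlexHilb d).ge

end
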